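/- (Theorem 4, inclusion optimal ⊆ S) Under the standing assumptions on the global optimization problem, assume the problem is solvable. Then every globally optimal solution x̃ : Fin n → ℝ satisfies (x̃_j : EReal) ≤ x*_j(A,b) for all j with k_j = 0 and (x̃_j : EReal) = x*_j(A,b) for all j with k_j > 0. -/

import Mathlib

open scoped BigOperators

noncomputable section

/-- Max-plus product: `(A ⊗ x)_i = ⨆_j (A i j + x_j)` in `EReal`. -/
def maxPlus {m n : ℕ} (A : Matrix (Fin m) (Fin n) EReal) (x : Fin n → EReal)
    (i : Fin m) : EReal :=
  ⨆ j, A i j + x j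

/-- Auxiliary subtraction: `s(b,a) = +∞` if `a = -∞`, else `b - a`. -/
def sSub (b a : EReal) : EReal := if a = ⊥ then ⊤ else b - a

/-- Greatest subsolution `x*(A,b)_j = ⨅_i s(b_i, A i j)`. -/
def xstar {m n : ℕ} (A : Matrix (Fin m) (Fin n) EReal) (b : Fin m → EReal)
    (j : Fin n) : EReal :=
  ⨅ i, sSub (b i) (A i j)

/-- Objective function `F(x)_i = ⨆_j (A i j + x_j)` for real vectors `x`. -/
def objF {m n : ℕ} (A : Matrix (Fin m) (Fin n) EReal) (x : Fin n → ℝ)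
    (i : Fin m) : EReal :=
  ⨆ j, A i j + (x j : EReal)

/-- `J = {j | k_j > 0}` as a finite set. -/
def Jset {n : ℕ} (k : Fin n → ℝ) : Finset (Fin n) :=
  Finset.univ.filter (fun j => 0 < k j)

/-- Greatest lower bound `b_i = ((∑_{j ∈ J} k_j * A i j) + c) / (∑_{j ∈ J} k_j)`. -/
def glb {m n : ℕ} (A : Matrix (Fin m) (Fin n) EReal) (k : Fin n → ℝ) (c : ℝ)
    (i : Fin m) : EReal :=
  ((∑ j ∈ Jset k, (k j : EReal) * A i j) + (c : EReal)) /
    ((∑ j ∈ Jset k, k j : ℝ) : EReal)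

/-- `xt` is a globally optimal solution of the problem `(A, k, c)`. -/
def IsOptimal {m n : ℕ} (A : Matrix (Fin m) (Fin n) EReal) (k : Fin n → ℝ)
    (c : ℝ) (xt : Fin n → ℝ) : Prop :=
  (∑ j, k j * xt j = c) ∧
    ∀ x : Fin n → ℝ, (∑ j, k j * x j = c) → ∀ i, objF A xt i ≤ objF A x i

/-- The max-plus linear form `x ↦ ⨆ j, a j + x j` on real vectors: one component of the objective
`objF`, over an arbitrary index type. -/
def maxPlusForm {κ : Type*} (a : κ → EReal) (x : κ → ℝ) : EReal :=
  ⨆ j, a j + (x j : EReal)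

/-- The point `x` lies on the hyperplane `∑ j, k j * y j = c` and minimizes the max-plus linear form
of `a` over it. This is global optimality for a single component of the objective. -/
def IsHyperplaneMin {κ : Type*} [Fintype κ] (a : κ → EReal) (k : κ → ℝ) (c : ℝ) (x : κ → ℝ) :
    Prop :=
  ∑ j, k j * x j = c ∧ IsMinOn (maxPlusForm a) {y | ∑ j, k j * y j = c} x

/-- The value `((∑ j ∈ J, k j * a j) + c) / ∑ j ∈ J, k j` with `J = {j | 0 < k j}`: one component of
`glb`, over an arbitrary finite index type. When `J` is empty the division by `0` makes it `0`. -/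
def hyperplaneBound {κ : Type*} [Fintype κ] (a : κ → EReal) (k : κ → ℝ) (c : ℝ) : EReal :=
  ((∑ j with 0 < k j, (k j : EReal) * a j) + (c : EReal)) / ((∑ j with 0 < k j, k j : ℝ) : EReal)

lemma le_sSub_iff_add_le {x a b : EReal} (ha : a ≠ ⊤) : x ≤ sSub b a ↔ a + x ≤ b := by
  unfold sSub
  split_ifs with hbot
  · simp [hbot]
  · rw [EReal.le_sub_iff_add_le (Or.inl hbot) (Or.inl ha), add_comm]

lemma sSub_add_left {a : EReal} (hbot : a ≠ ⊥) (htop : a ≠ ⊤) (x : EReal) :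
    sSub (a + x) a = x := by
  lift a to ℝ using ⟨htop, hbot⟩
  rw [sSub, if_neg hbot, EReal.add_sub_cancel_left]

lemma ereal_coe_sum {κ : Type*} (s : Finset κ) (f : κ → ℝ) :
    ((∑ j ∈ s, f j : ℝ) : EReal) = ∑ j ∈ s, (f j : EReal) :=
  map_sum (⟨⟨Real.toEReal, EReal.coe_zero⟩, EReal.coe_add⟩ : ℝ →+ EReal) f s

section Form

variable {κ : Type*} {a : κ → EReal} {x y : κ → ℝ}

lemma add_le_maxPlusForm (a : κ → EReal) (x : κ → ℝ) (j : κ) : a j + x j ≤ maxPlusForm a x :=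
  le_iSup (fun j => a j + (x j : EReal)) j

lemma maxPlusForm_lt_maxPlusForm [Finite κ] (htop : ∀ j, a j ≠ ⊤) (hfin : ∃ j, a j ≠ ⊥)
    (hlt : ∀ j, a j ≠ ⊥ → y j < x j) : maxPlusForm a y < maxPlusForm a x := by
  cases nonempty_fintype κ
  have hbot_lt : ⊥ < maxPlusForm a x := by
    obtain ⟨j, hj⟩ := hfin
    exact (EReal.bot_lt_add_iff.2 ⟨bot_lt_iff_ne_bot.2 hj, EReal.bot_lt_coe _⟩).trans_le
      (add_le_maxPlusForm a x j)
  rw [maxPlusForm, ← Finset.sup_univ_eq_iSup, Finset.sup_lt_iff hbot_lt]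
  intro j _
  by_cases hj : a j = ⊥
  · rwa [hj, EReal.bot_add]
  · refine lt_of_lt_of_le ?_ (add_le_maxPlusForm a x j)
    rw [← EReal.coe_toReal (htop j) hj]
    exact EReal.add_lt_add_left_coe (EReal.coe_lt_coe_iff.2 (hlt j hj)) _

lemma maxPlusForm_sub_toReal_le (htop : ∀ j, a j ≠ ⊤) (β : ℝ) :
    maxPlusForm a (fun j => β - (a j).toReal) ≤ β := by
  refine iSup_le fun j => ?_
  by_cases hj : a j = ⊥
  · simp [hj]
  · calc a j + (β - (a j).toReal : ℝ) = ((a j).toReal + (β - (a j).toReal) : ℝ) := by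
          rw [EReal.coe_add, EReal.coe_toReal (htop j) hj]
      _ ≤ β := by rw [add_sub_cancel]

end Form

lemma sum_mul_sub_one_add_single {κ K : Type*} [Fintype κ] [DecidableEq κ] [Field K]
    (k x : κ → K) {j₀ : κ} (hj₀ : k j₀ ≠ 0) :
    ∑ j, k j * (x j - 1 + Pi.single (M := fun _ => K) j₀ ((∑ i, k i) / k j₀) j)
      = ∑ j, k j * x j := by
  simp only [mul_add, mul_sub, mul_one, Finset.sum_add_distrib, Finset.sum_sub_distrib,
    Pi.single_apply, mul_ite, mul_zero, Finset.sum_ite_eq', Finset.mem_univ, if_true,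
    mul_div_cancel₀ _ hj₀]
  ring

namespace IsHyperplaneMin

variable {κ : Type*} [Fintype κ] {a : κ → EReal} {k x : κ → ℝ} {c : ℝ}

lemma not_forall_lt (h : IsHyperplaneMin a k c x) (htop : ∀ j, a j ≠ ⊤) (hfin : ∃ j, a j ≠ ⊥)
    {y : κ → ℝ} (hy : ∑ j, k j * y j = c) : ¬ ∀ j, a j ≠ ⊥ → y j < x j := fun hlt =>
  (maxPlusForm_lt_maxPlusForm htop hfin hlt).not_ge (h.2 hy)

-- Lower every coordinate of `x` by `1` and restore the constraint by changing `x j` alone. If `a j`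
-- is `⊥` or the correction is nonpositive, every relevant coordinate has strictly decreased.
lemma ne_bot_and_div_pos (h : IsHyperplaneMin a k c x) (htop : ∀ j, a j ≠ ⊤)
    (hfin : ∃ j, a j ≠ ⊥) {j : κ} (hj : k j ≠ 0) : a j ≠ ⊥ ∧ 0 < (∑ i, k i) / k j := by
  classical
  by_contra hcon
  refine h.not_forall_lt htop hfin ((sum_mul_sub_one_add_single k x hj).trans h.1) fun i hi => ?_
  rcases eq_or_ne i j with rfl | hij
  · have hnonpos : (∑ l, k l) / k i ≤ 0 := not_lt.1 fun hlt => hcon ⟨hi, hlt⟩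
    rw [Pi.single_eq_same]
    linarith
  · rw [Pi.single_eq_of_ne hij]
    linarith

lemma sum_pos (h : IsHyperplaneMin a k c x) (htop : ∀ j, a j ≠ ⊤) (hfin : ∃ j, a j ≠ ⊥)
    (hk : ∃ j, 0 < k j) : 0 < ∑ j, k j := by
  obtain ⟨j, hj⟩ := hk
  exact (div_pos_iff_of_pos_right hj).1 (h.ne_bot_and_div_pos htop hfin hj.ne').2

lemma weight_nonneg (h : IsHyperplaneMin a k c x) (htop : ∀ j, a j ≠ ⊤) (hfin : ∃ j, a j ≠ ⊥)
    (hk : ∃ j, 0 < k j) (j : κ) : 0 ≤ k j := by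
  by_contra! hneg
  exact (h.ne_bot_and_div_pos htop hfin hneg.ne).2.not_gt
    (div_neg_of_pos_of_neg (h.sum_pos htop hfin hk) hneg)

lemma exists_hyperplaneBound_eq (h : IsHyperplaneMin a k c x) (htop : ∀ j, a j ≠ ⊤)
    (hfin : ∃ j, a j ≠ ⊥) (hk : ∃ j, 0 < k j) :
    ∃ β : ℝ, hyperplaneBound a k c = β ∧ ∑ j, k j * (β - (a j).toReal) = c := by
  have hsum_filter (f : κ → ℝ) : ∑ j with 0 < k j, k j * f j = ∑ j, k j * f j :=
    Finset.sum_filter_of_ne fun j _ hj =>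
      (h.weight_nonneg htop hfin hk j).lt_of_ne' (left_ne_zero_of_mul hj)
  have hnum : ∑ j with 0 < k j, (k j : EReal) * a j = (∑ j, k j * (a j).toReal : ℝ) := by
    rw [← hsum_filter, ereal_coe_sum]
    refine Finset.sum_congr rfl fun j hj => ?_
    have hbot := (h.ne_bot_and_div_pos htop hfin (Finset.mem_filter.1 hj).2.ne').1
    rw [EReal.coe_mul, EReal.coe_toReal (htop j) hbot]
  have hden : ∑ j with 0 < k j, k j = ∑ j, k j := by
    simpa only [Pi.one_apply, mul_one] using hsum_filter 1
  refine ⟨(∑ j, k j * (a j).toReal + c) / ∑ j, k j, ?_, ?_⟩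
  · rw [hyperplaneBound, hnum, hden, EReal.coe_div, EReal.coe_add]
  · simp only [mul_sub, Finset.sum_sub_distrib, ← Finset.sum_mul,
      mul_div_cancel₀ _ (h.sum_pos htop hfin hk).ne', add_sub_cancel_left]

lemma add_le_hyperplaneBound (h : IsHyperplaneMin a k c x) (htop : ∀ j, a j ≠ ⊤)
    (hk : ∃ j, 0 < k j) (j : κ) : a j + x j ≤ hyperplaneBound a k c := by
  by_cases hj : a j = ⊥
  · simp [hj]
  obtain ⟨β, hβ, hfeas⟩ := h.exists_hyperplaneBound_eq htop ⟨j, hj⟩ hk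
  calc a j + x j ≤ maxPlusForm a x := add_le_maxPlusForm a x j
    _ ≤ maxPlusForm a (fun i => β - (a i).toReal) := h.2 hfeas
    _ ≤ β := maxPlusForm_sub_toReal_le htop β
    _ = hyperplaneBound a k c := hβ.symm

-- The nonnegative slacks `β - a j - x j` have zero `k`-weighted sum, both `x` and the point
-- `β - a` being on the hyperplane.
lemma add_eq_hyperplaneBound (h : IsHyperplaneMin a k c x) (htop : ∀ j, a j ≠ ⊤)
    (hfin : ∃ j, a j ≠ ⊥) {j : κ} (hj : 0 < k j) : a j + x j = hyperplaneBound a k c := by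
  have hcoe {i : κ} (hi : k i ≠ 0) : a i = ((a i).toReal : EReal) :=
    (EReal.coe_toReal (htop i) (h.ne_bot_and_div_pos htop hfin hi).1).symm
  obtain ⟨β, hβ, hfeas⟩ := h.exists_hyperplaneBound_eq htop hfin ⟨j, hj⟩
  have hslack (i : κ) : 0 ≤ k i * (β - (a i).toReal - x i) := by
    rcases eq_or_ne (k i) 0 with hi | hi
    · rw [hi, zero_mul]
    have hle := h.add_le_hyperplaneBound htop ⟨j, hj⟩ i
    rw [hβ, hcoe hi, ← EReal.coe_add, EReal.coe_le_coe_iff] at hle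
    exact mul_nonneg (h.weight_nonneg htop hfin ⟨j, hj⟩ i) (by linarith)
  have hsum : ∑ i, k i * (β - (a i).toReal - x i) = 0 := by
    simp only [mul_sub _ (_ - _), Finset.sum_sub_distrib, hfeas, h.1, sub_self]
  have hzero := (Finset.sum_eq_zero_iff_of_nonneg fun i _ => hslack i).1 hsum j (Finset.mem_univ j)
  have htight : β - (a j).toReal - x j = 0 := (mul_eq_zero.1 hzero).resolve_left hj.ne'
  rw [hβ, hcoe hj.ne', ← EReal.coe_add, EReal.coe_eq_coe_iff]
  linarith

lemma le_sSub (h : IsHyperplaneMin a k c x) (htop : ∀ j, a j ≠ ⊤) (hk : ∃ j, 0 < k j) (j : κ) :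
    x j ≤ sSub (hyperplaneBound a k c) (a j) :=
  (le_sSub_iff_add_le (htop j)).2 (h.add_le_hyperplaneBound htop hk j)

lemma eq_sSub (h : IsHyperplaneMin a k c x) (htop : ∀ j, a j ≠ ⊤) (hfin : ∃ j, a j ≠ ⊥)
    {j : κ} (hj : 0 < k j) : x j = sSub (hyperplaneBound a k c) (a j) := by
  rw [← h.add_eq_hyperplaneBound htop hfin hj,
    sSub_add_left (h.ne_bot_and_div_pos htop hfin hj.ne').1 (htop j)]

end IsHyperplaneMin

theorem stmt_17_general {ι κ : Type*} [Fintype κ] (A : Matrix ι κ EReal)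
    (hA : ∀ i j, A i j ≠ ⊤) (hfin : ∃ i j, A i j ≠ ⊥) (k : κ → ℝ) (hk : ∃ j, 0 < k j) (c : ℝ)
    (x : κ → ℝ) (hx : ∀ i, IsHyperplaneMin (A i) k c x) :
    (∀ j, (x j : EReal) ≤ ⨅ i, sSub (hyperplaneBound (A i) k c) (A i j)) ∧
      ∀ j, 0 < k j → (x j : EReal) = ⨅ i, sSub (hyperplaneBound (A i) k c) (A i j) := by
  have hle (j : κ) : (x j : EReal) ≤ ⨅ i, sSub (hyperplaneBound (A i) k c) (A i j) :=
    le_iInf fun i => (hx i).le_sSub (hA i) hk j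
  obtain ⟨i, hi⟩ := hfin
  exact ⟨hle, fun j hj => (hle j).antisymm (iInf_le_of_le i ((hx i).eq_sSub (hA i) hi hj).ge)⟩

theorem stmt_17 {m n : ℕ} (hm : 1 ≤ m) (hn : 1 ≤ n)
    (A : Matrix (Fin m) (Fin n) EReal) (hA : ∀ i j, A i j ≠ ⊤)
    (k : Fin n → ℝ) (hk : ∀ j, 0 ≤ k j) (hk0 : ∃ j, k j ≠ 0) (c : ℝ)
    (hrow : ∀ i, ∃ j, A i j ≠ ⊥)
    (hcol : ∀ j, (∀ i, A i j = ⊥) → 0 < k j)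
    (hsolv : ∃ xt : Fin n → ℝ, IsOptimal A k c xt) :
    ∀ xt : Fin n → ℝ, IsOptimal A k c xt →
      (∀ j, k j = 0 → (xt j : EReal) ≤ xstar A (glb A k c) j) ∧
      (∀ j, 0 < k j → (xt j : EReal) = xstar A (glb A k c) j) := by
  intro xt hxt
  exact (stmt_17_general A hA ⟨⟨0, hm⟩, hrow ⟨0, hm⟩⟩ k (hk0.imp fun j hj => (hk j).lt_of_ne' hj) c
    xt fun i => ⟨hxt.1, fun y hy => hxt.2 y hy i⟩).imp_left fun hle j _ => hle j
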